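/- With p₀(n) := 205n² − 160n + 32 and p₁(n) := 553n² − 440n + 88, the series identity ∑_{n≥1} (−1/2^10)^n · ((1)_n)^5 / ((1/2)_n)^5 · [ p₁(n)/n^7 − (3 H_n^{(2)} − H_{2n}^{(2)}) p₀(n)/n^5 ] = −2 ζ(5) holds, where ζ is the Riemann zeta function. -/

import Mathlib

/-- The rising factorial (Pochhammer symbol) `(a)ₙ = a(a+1)⋯(a+n-1)`. -/
noncomputable def risingFactorial (a : ℝ) (n : ℕ) : ℝ :=
  ∏ i ∈ Finset.range n, (a + i)

/-- The generalized harmonic number `H_n^{(s)} = ∑_{k=1}^n 1/k^s`. -/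
noncomputable def genHarmonic (s n : ℕ) : ℝ :=
  ∑ k ∈ Finset.range n, 1 / ((k : ℝ) + 1) ^ s

/-!
Put `w_t(n, k) = (-1)ⁿ / (binom(2n, n) B(n, k)⁴) · ∏_{j ≤ n} (1 - t/j²)² ∏_{j ≤ k} (1 - t/j²) /
∏_{j ≤ n+k+1} (1 - t/j²)`, where `B(n, k) = (n+k+1)! / (n! k!)`. With `N = n + 1`, `m = k + 1` and
`d = N + m`, the polynomial identity

  `d²(d² - t)(m² + (m-N)² - t) = N(N + 2m)(N² - t)² + m²(m² - t)((m+N)² + (m+2N)² - t)`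

says that `F_t = (n + 2k + 2) w_t` and `G_t = ((d-1)² + (d+n)² - t) w_t / (2(2n + 1))` satisfy the
Wilf–Zeilberger equation `F_t(n+1, k) - F_t(n, k) = G_t(n, k+1) - G_t(n, k)`. Here
`F_t(0, k) = 2 / (m (m² - t))`, whose sum over `k` has `2 ζ(5)` as its coefficient of `t`. Passing
to this coefficient turns the products into harmonic numbers. Summing the pair along its diagonal
instead of along the row `n = 0` produces the accelerated series.
-/

open Filter Topology

/-! ### Summing a Wilf–Zeilberger pair along its diagonal -/

section WilfZeilberger

variable {E : Type*} [AddCommGroup E]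

theorem tsum_nat_add_sub_tsum_nat_add_of_telescoping [TopologicalSpace E] [IsTopologicalAddGroup E]
    [T2Space E] {f f' g : ℕ → E} (hfg : ∀ k, f' k - f k = g (k + 1) - g k) (hf : Summable f)
    (hf' : Summable f') (hg : Tendsto g atTop (𝓝 0)) (m : ℕ) :
    ∑' k, f (m + k) - ∑' k, f' (m + k) = g m := by
  have hsum := (((summable_nat_add_iff m).2 hf').hasSum.sub
    ((summable_nat_add_iff m).2 hf).hasSum).tendsto_sum_nat
  have htel (K : ℕ) :
      ∑ k ∈ Finset.range K, (f' (k + m) - f (k + m)) = g (K + m) - g m := by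
    simp only [hfg, add_right_comm _ m 1, Finset.sum_range_sub fun k => g (k + m), Nat.zero_add]
  simp only [htel] at hsum
  have hlim : Tendsto (fun K => g (K + m) - g m) atTop (𝓝 (0 - g m)) :=
    ((tendsto_add_atTop_iff_nat m).2 hg).sub_const (g m)
  simp only [add_comm m]
  rw [← neg_sub, tendsto_nhds_unique hsum hlim, zero_sub, neg_neg]

variable [UniformSpace E] [IsUniformAddGroup E] [CompleteSpace E] [T2Space E]

theorem hasSum_diagonal_of_wilfZeilberger {F G : ℕ → ℕ → E}
    (hFG : ∀ n k, F (n + 1) k - F n k = G n (k + 1) - G n k)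
    (hF : Summable fun p : ℕ × ℕ => F p.1 (p.1 + p.2))
    (hG : ∀ n, Tendsto (G n) atTop (𝓝 0)) :
    HasSum (fun n => F (n + 1) n + G n n) (∑' k, F 0 k) := by
  have hrow (n : ℕ) : Summable (F n) :=
    (summable_nat_add_iff n).1 <| by simpa only [add_comm n] using hF.prod_factor n
  set S : ℕ → E := fun n => ∑' k, F n (n + k) with hS
  have hstep (n : ℕ) : F (n + 1) n + G n n = S n - S (n + 1) := by
    have htail : ∑' k, F (n + 1) (n + k) = F (n + 1) n + S (n + 1) := by
      have hshift : Summable fun k => F (n + 1) (n + k) := by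
        simpa only [add_comm n] using (summable_nat_add_iff n).2 (hrow (n + 1))
      rw [hshift.tsum_eq_zero_add, hS]
      simp only [add_zero, add_assoc, add_comm 1]
    rw [← tsum_nat_add_sub_tsum_nat_add_of_telescoping (hFG n) (hrow n) (hrow (n + 1)) (hG n) n,
      htail]
    abel
  have hsum : HasSum S (∑' n, S n) := hF.prod.hasSum
  simpa only [hstep, hS, sub_sub_cancel, Finset.sum_range_one, Nat.zero_add] using
    hsum.sub ((hasSum_nat_add_iff' 1).2 hsum)

end WilfZeilberger

/-! ### Generalized harmonic numbers and rising factorials -/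

theorem genHarmonic_succ (s n : ℕ) :
    genHarmonic s (n + 1) = genHarmonic s n + 1 / ((n : ℝ) + 1) ^ s :=
  Finset.sum_range_succ _ _

theorem genHarmonic_nonneg (s n : ℕ) : 0 ≤ genHarmonic s n :=
  Finset.sum_nonneg fun _ _ => by positivity

theorem genHarmonic_two_le (n : ℕ) : genHarmonic 2 n ≤ 2 := by
  have h := sum_Ioo_inv_sq_le (α := ℝ) 0 (n + 1)
  rw [← Finset.Ico_add_one_left_eq_Ioo, Finset.sum_Ico_eq_sum_range] at h
  simpa [genHarmonic, add_comm] using h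

theorem risingFactorial_succ (a : ℝ) (n : ℕ) :
    risingFactorial a (n + 1) = risingFactorial a n * (a + n) :=
  Finset.prod_range_succ _ _

theorem risingFactorial_pos {a : ℝ} (ha : 0 < a) (n : ℕ) : 0 < risingFactorial a n :=
  Finset.prod_pos fun _ _ => by positivity

theorem cast_centralBinom_succ (n : ℕ) :
    ((n + 1).centralBinom : ℝ) = 2 * (2 * n + 1) * n.centralBinom / (n + 1) := by
  rw [eq_div_iff (by positivity), mul_comm]
  exact_mod_cast n.succ_mul_centralBinom_succ

theorem centralBinom_mul_risingFactorial_one (n : ℕ) :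
    n.centralBinom * risingFactorial 1 n = 4 ^ n * risingFactorial (1 / 2) n := by
  induction n with
  | zero => simp [risingFactorial]
  | succ n ih =>
    calc ((n + 1).centralBinom : ℝ) * risingFactorial 1 (n + 1)
        = 2 * (2 * n + 1) * (n.centralBinom * risingFactorial 1 n) := by
          rw [cast_centralBinom_succ, risingFactorial_succ]
          field_simp
          ring
      _ = 4 ^ (n + 1) * risingFactorial (1 / 2) (n + 1) := by
          rw [ih, risingFactorial_succ]
          ring

theorem neg_one_div_pow_mul_risingFactorial_div (n : ℕ) :
    (-1 / 2 ^ 10 : ℝ) ^ n * risingFactorial 1 n ^ 5 / risingFactorial (1 / 2) n ^ 5 =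
      (-1) ^ n / n.centralBinom ^ 5 := by
  have hc : (n.centralBinom : ℝ) ≠ 0 := mod_cast n.centralBinom_ne_zero
  have hr := (risingFactorial_pos one_half_pos n).ne'
  have h4 : ((2 : ℝ) ^ 10) ^ n = (4 ^ n) ^ 5 := by
    rw [← pow_mul, ← pow_mul, mul_comm n 5, pow_mul, pow_mul]
    norm_num
  rw [div_pow, h4, ← mul_div_right_comm, div_div, div_eq_div_iff (by positivity) (by positivity),
    ← mul_pow (4 ^ n), ← centralBinom_mul_risingFactorial_one]
  ring

/-! ### The reciprocal beta function -/

/-- The reciprocal `(n + k + 1)! / (n! k!)` of Euler's beta value `B(n + 1, k + 1)`, in a form that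
is visibly a natural number; it is the building block of the Wilf–Zeilberger pair. -/
def invBeta (n k : ℕ) : ℕ :=
  (k + 1) * (n + k + 1).choose n

theorem succ_le_invBeta (n k : ℕ) : k + 1 ≤ invBeta n k :=
  Nat.le_mul_of_pos_right _ (Nat.choose_pos (by omega))

theorem invBeta_zero_left (k : ℕ) : invBeta 0 k = k + 1 := by
  simp [invBeta]

theorem cast_invBeta_succ_left (n k : ℕ) :
    (invBeta (n + 1) k : ℝ) = (n + k + 2) / (n + 1) * invBeta n k := by
  have h : (n + 1) * invBeta (n + 1) k = (n + k + 2) * invBeta n k := by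
    rw [invBeta, invBeta, show n + 1 + k + 1 = n + k + 1 + 1 by ring]
    linear_combination (k + 1) * (Nat.add_one_mul_choose_eq (n + k + 1) n).symm
  rw [div_mul_eq_mul_div, eq_div_iff (by positivity), mul_comm]
  exact_mod_cast h

theorem cast_invBeta_succ_right (n k : ℕ) :
    (invBeta n (k + 1) : ℝ) = (n + k + 2) / (k + 1) * invBeta n k := by
  have h : (k + 1) * invBeta n (k + 1) = (n + k + 2) * invBeta n k := by
    have hch := Nat.choose_mul_succ_eq (n + k + 1) n
    rw [show n + k + 1 + 1 - n = k + 2 by omega] at hch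
    rw [invBeta, invBeta, ← add_assoc n k 1]
    linear_combination (k + 1) * hch.symm
  rw [div_mul_eq_mul_div, eq_div_iff (by positivity), mul_comm]
  exact_mod_cast h

theorem invBeta_succ_self (n : ℕ) : invBeta (n + 1) n = (n + 1) * (n + 1).centralBinom := by
  rw [invBeta, Nat.centralBinom, show n + 1 + n + 1 = 2 * (n + 1) by ring]

/-! ### The Wilf–Zeilberger pair -/

/-- The weight `w_0`, the hypergeometric factor common to both members of the pair. -/
noncomputable def wzWeight (n k : ℕ) : ℝ :=
  (-1) ^ n / (n.centralBinom * invBeta n k ^ 4)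

/-- The harmonic factor: the logarithmic derivative at `t = 0` of the deformed weight `w_t`. -/
noncomputable def wzHarmonic (n k : ℕ) : ℝ :=
  genHarmonic 2 (n + k + 1) - genHarmonic 2 k - 2 * genHarmonic 2 n

/-- The member of the pair that is summed over `k`: the coefficient of `t` in `F_t`. -/
noncomputable def wzF (n k : ℕ) : ℝ :=
  wzWeight n k * ((n + 2 * k + 2) * wzHarmonic n k)

/-- The certificate companion of `wzF`: the coefficient of `t` in `G_t`. -/
noncomputable def wzG (n k : ℕ) : ℝ :=
  wzWeight n k *
    ((((n : ℝ) + k + 1) ^ 2 + (2 * n + k + 2) ^ 2) * wzHarmonic n k - 1) / (2 * (2 * n + 1))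

theorem wzWeight_succ_right (n k : ℕ) :
    wzWeight n (k + 1) = wzWeight n k * (((k : ℝ) + 1) / (n + k + 2)) ^ 4 := by
  rw [wzWeight, wzWeight, cast_invBeta_succ_right]
  field_simp

theorem wzWeight_succ_left (n k : ℕ) :
    wzWeight (n + 1) k =
      -(wzWeight n k * (((n : ℝ) + 1) / (2 * (2 * n + 1)) * ((n + 1) / (n + k + 2)) ^ 4)) := by
  rw [wzWeight, wzWeight, cast_invBeta_succ_left, cast_centralBinom_succ]
  field_simp
  ring

theorem wzHarmonic_succ_right (n k : ℕ) :
    wzHarmonic n (k + 1) =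
      wzHarmonic n k + 1 / ((n : ℝ) + k + 2) ^ 2 - 1 / ((k : ℝ) + 1) ^ 2 := by
  rw [wzHarmonic, wzHarmonic, ← add_assoc n k 1, genHarmonic_succ 2 k,
    genHarmonic_succ 2 (n + k + 1)]
  push_cast
  ring

theorem wzHarmonic_succ_left (n k : ℕ) :
    wzHarmonic (n + 1) k =
      wzHarmonic n k + 1 / ((n : ℝ) + k + 2) ^ 2 - 2 / ((n : ℝ) + 1) ^ 2 := by
  rw [wzHarmonic, wzHarmonic, add_right_comm n 1 k, genHarmonic_succ 2 n,
    genHarmonic_succ 2 (n + k + 1)]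
  push_cast
  ring

theorem wzF_succ_sub (n k : ℕ) : wzF (n + 1) k - wzF n k = wzG n (k + 1) - wzG n k := by
  simp only [wzF, wzG, wzWeight_succ_right, wzWeight_succ_left, wzHarmonic_succ_right,
    wzHarmonic_succ_left]
  push_cast
  field_simp
  ring

theorem wzF_zero_left (k : ℕ) : wzF 0 k = 2 * (1 / ((k : ℝ) + 1) ^ 5) := by
  have hh : wzHarmonic 0 k = 1 / ((k : ℝ) + 1) ^ 2 := by
    rw [wzHarmonic, Nat.zero_add, genHarmonic_succ]
    simp [genHarmonic]
  rw [wzF, hh, wzWeight, invBeta_zero_left, Nat.centralBinom_zero]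
  push_cast
  field_simp
  ring

theorem wzWeight_succ_self (n : ℕ) :
    wzWeight (n + 1) n = (-1) ^ (n + 1) / ((n + 1).centralBinom ^ 5 * ((n : ℝ) + 1) ^ 4) := by
  rw [wzWeight, invBeta_succ_self]
  push_cast
  ring

theorem wzF_succ_self_add_wzG_self (n : ℕ) :
    wzF (n + 1) n + wzG n n = -((-1) ^ (n + 1) / (n + 1).centralBinom ^ 5 *
        ((553 * ((n : ℝ) + 1) ^ 2 - 440 * ((n : ℝ) + 1) + 88) / ((n : ℝ) + 1) ^ 7 -
          (3 * genHarmonic 2 (n + 1) - genHarmonic 2 (2 * (n + 1))) *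
            (205 * ((n : ℝ) + 1) ^ 2 - 160 * ((n : ℝ) + 1) + 32) / ((n : ℝ) + 1) ^ 5)) := by
  have hw : wzWeight n n = -(wzWeight (n + 1) n * (32 * (2 * n + 1) / (n + 1))) := by
    rw [wzWeight_succ_left]
    field_simp
    ring
  have hh : wzHarmonic n n = wzHarmonic (n + 1) n + 7 / (4 * ((n : ℝ) + 1) ^ 2) := by
    rw [wzHarmonic_succ_left]
    field_simp
    ring
  have hH : wzHarmonic (n + 1) n = genHarmonic 2 (2 * (n + 1)) - 3 * genHarmonic 2 (n + 1) +
      1 / ((n : ℝ) + 1) ^ 2 := by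
    rw [wzHarmonic, show n + 1 + n + 1 = 2 * (n + 1) by ring, genHarmonic_succ 2 n]
    ring
  rw [wzF, wzG, hw, hh, hH, wzWeight_succ_self]
  push_cast
  field_simp
  ring

/-! ### Convergence -/

theorem abs_wzHarmonic_le (n k : ℕ) : |wzHarmonic n k| ≤ 6 := by
  rw [wzHarmonic, abs_le]
  constructor <;>
    linarith [genHarmonic_two_le (n + k + 1), genHarmonic_two_le k, genHarmonic_two_le n,
      genHarmonic_nonneg 2 (n + k + 1), genHarmonic_nonneg 2 k, genHarmonic_nonneg 2 n]

theorem abs_wzWeight_le (n k : ℕ) : |wzWeight n k| ≤ 1 / (((n : ℝ) + 1) * (k + 1) ^ 4) := by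
  have hc : (n : ℝ) + 1 ≤ n.centralBinom :=
    mod_cast Nat.le_of_dvd n.centralBinom_pos n.succ_dvd_centralBinom
  have hb : (k : ℝ) + 1 ≤ invBeta n k := mod_cast succ_le_invBeta n k
  rw [wzWeight, abs_div, abs_pow, abs_neg, abs_one, one_pow, abs_of_nonneg (by positivity)]
  gcongr

theorem abs_wzF_diagonal_le (n k : ℕ) :
    |wzF n (n + k)| ≤ 18 * (1 / ((n : ℝ) + 1) ^ 2 * (1 / ((k : ℝ) + 1) ^ 2)) := by
  calc |wzF n (n + k)|
      = |wzWeight n (n + k)| * (((n : ℝ) + 2 * (n + k : ℕ) + 2) * |wzHarmonic n (n + k)|) := by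
        rw [wzF, abs_mul, abs_mul,
          abs_of_nonneg (by positivity : (0 : ℝ) ≤ n + 2 * (n + k : ℕ) + 2)]
    _ ≤ 1 / (((n : ℝ) + 1) * ((n + k : ℕ) + 1) ^ 4) * (3 * (n + k + 1) * 6) := by
        gcongr
        · exact abs_wzWeight_le n (n + k)
        · push_cast
          linarith [(k.cast_nonneg : (0 : ℝ) ≤ k)]
        · exact abs_wzHarmonic_le n (n + k)
    _ = 18 * (1 / ((n : ℝ) + 1) * (1 / (((n : ℝ) + k + 1) * (n + k + 1) ^ 2))) := by
        push_cast
        field_simp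
        ring
    _ ≤ 18 * (1 / ((n : ℝ) + 1) * (1 / (((n : ℝ) + 1) * ((k : ℝ) + 1) ^ 2))) := by
        gcongr <;> linarith [(n.cast_nonneg : (0 : ℝ) ≤ n), (k.cast_nonneg : (0 : ℝ) ≤ k)]
    _ = 18 * (1 / ((n : ℝ) + 1) ^ 2 * (1 / ((k : ℝ) + 1) ^ 2)) := by
        field_simp

theorem abs_wzG_le (n k : ℕ) : |wzG n k| ≤ 31 * (n + 1) * (1 / ((k : ℝ) + 1) ^ 2) := by
  set A : ℝ := ((n : ℝ) + k + 1) ^ 2 + (2 * n + k + 2) ^ 2 with hA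
  have hA_nonneg : 0 ≤ A := by positivity
  have hA_le : A ≤ 5 * (((n : ℝ) + 1) ^ 2 * (k + 1) ^ 2) := by
    rw [hA, ← sub_nonneg]
    ring_nf
    positivity
  have h_one_le : 1 ≤ ((n : ℝ) + 1) ^ 2 * (k + 1) ^ 2 := by
    exact_mod_cast Nat.one_le_iff_ne_zero.2 (by positivity)
  have hnum : |A * wzHarmonic n k - 1| ≤ 31 * (((n : ℝ) + 1) ^ 2 * (k + 1) ^ 2) := by
    calc |A * wzHarmonic n k - 1| ≤ |A * wzHarmonic n k| + |1| := abs_sub _ _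
      _ = A * |wzHarmonic n k| + 1 := by rw [abs_mul, abs_of_nonneg hA_nonneg, abs_one]
      _ ≤ A * 6 + 1 := by gcongr; exact abs_wzHarmonic_le n k
      _ ≤ 31 * (((n : ℝ) + 1) ^ 2 * (k + 1) ^ 2) := by linarith
  calc |wzG n k| = |wzWeight n k| * |A * wzHarmonic n k - 1| / (2 * (2 * n + 1)) := by
        rw [wzG, abs_div, abs_mul, abs_of_nonneg (by positivity : (0 : ℝ) ≤ 2 * (2 * n + 1))]
    _ ≤ |wzWeight n k| * |A * wzHarmonic n k - 1| :=
        div_le_self (by positivity) (by linarith [(n.cast_nonneg : (0 : ℝ) ≤ n)])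
    _ ≤ 1 / (((n : ℝ) + 1) * (k + 1) ^ 4) * (31 * (((n : ℝ) + 1) ^ 2 * (k + 1) ^ 2)) := by
        gcongr
        exact abs_wzWeight_le n k
    _ = 31 * (n + 1) * (1 / ((k : ℝ) + 1) ^ 2) := by
        field_simp

theorem summable_one_div_nat_add_one_sq : Summable fun k : ℕ => 1 / ((k : ℝ) + 1) ^ 2 := by
  simpa using (summable_nat_add_iff 1).2 (Real.summable_one_div_nat_pow.2 one_lt_two)

theorem summable_wzF_diagonal : Summable fun p : ℕ × ℕ => wzF p.1 (p.1 + p.2) :=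
  .of_norm_bounded
    ((summable_one_div_nat_add_one_sq.mul_of_nonneg summable_one_div_nat_add_one_sq
      (fun _ => by positivity) fun _ => by positivity).mul_left 18)
    fun p => abs_wzF_diagonal_le p.1 p.2

theorem tendsto_wzG (n : ℕ) : Tendsto (wzG n) atTop (𝓝 0) :=
  squeeze_zero_norm (abs_wzG_le n) (summable_one_div_nat_add_one_sq.mul_left _).tendsto_atTop_zero

theorem ofReal_tsum_wzF_zero : ((∑' k, wzF 0 k : ℝ) : ℂ) = 2 * riemannZeta 5 := by
  have hzeta : riemannZeta 5 = ∑' k : ℕ, 1 / ((k : ℂ) + 1) ^ 5 := by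
    exact_mod_cast zeta_eq_tsum_one_div_nat_add_one_cpow (s := 5) (by norm_num)
  simp only [wzF_zero_left, tsum_mul_left, hzeta]
  push_cast
  rfl

/-- With `p₀(n) = 205n²−160n+32` and `p₁(n) = 553n²−440n+88`:
`∑_{n≥1} (−1/2^10)^n (1)ₙ^5/(1/2)ₙ^5 [ p₁(n)/n^7 − (3H_n^{(2)} − H_{2n}^{(2)})p₀(n)/n^5 ]
  = −2ζ(5)`. -/
theorem wz_zeta5_series :
    ∑' n : ℕ, ((((-1 / 2 ^ 10 : ℝ) ^ (n + 1) * (risingFactorial 1 (n + 1)) ^ 5 /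
        (risingFactorial (1 / 2) (n + 1)) ^ 5 *
        ((553 * ((n : ℝ) + 1) ^ 2 - 440 * ((n : ℝ) + 1) + 88) / ((n : ℝ) + 1) ^ 7 -
          (3 * genHarmonic 2 (n + 1) - genHarmonic 2 (2 * (n + 1))) *
            (205 * ((n : ℝ) + 1) ^ 2 - 160 * ((n : ℝ) + 1) + 32) /
            ((n : ℝ) + 1) ^ 5) : ℝ)) : ℂ)
      = -2 * riemannZeta 5 := by
  have hsum :=
    (hasSum_diagonal_of_wilfZeilberger wzF_succ_sub summable_wzF_diagonal tendsto_wzG).neg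
  simp only [wzF_succ_self_add_wzG_self, neg_neg] at hsum
  simp only [neg_one_div_pow_mul_risingFactorial_div]
  rw [← Complex.ofReal_tsum, hsum.tsum_eq, Complex.ofReal_neg, ofReal_tsum_wzF_zero, neg_mul]
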